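/- Let R be a commutative ring, n ≥ 2, let i ≠ j be indices in Fin n, let c ∈ R, and let g be an invertible n×n matrix over R. Let E denote the matrix with entry c in position (i,j) and 0 elsewhere, so that the transvection T = 1ₙ + E is invertible with inverse 1ₙ − E. Then there exists an n×n matrix P with entries in the polynomial ring R[t] such that: entrywise evaluation of P at t = 0 equals g; entrywise evaluation at t = 1 equals T * g * T⁻¹; and for every t ∈ R, the entrywise evaluation of P at t equals (1ₙ + t•E) * g * (1ₙ − t•E) and is an invertible matrix (with (1ₙ + t•E)⁻¹ = 1ₙ − t•E). -/

import Mathlib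

/-- Conjugation of an invertible matrix `g` by the transvection `T = 1 + E`, where
`E = stdBasisMatrix i j c` with `i ≠ j`, is naïvely `𝔸¹`-homotopic to the identity:
there is a matrix `P` of polynomials whose evaluation at `0` is `g`, at `1` is
`T * g * T⁻¹`, and at any `t` is the invertible matrix `(1 + t • E) * g * (1 - t • E)`. -/
theorem stmt_13 {R : Type*} [CommRing R] {n : ℕ} (hn : 2 ≤ n)
    (i j : Fin n) (hij : i ≠ j) (c : R)
    (g : Matrix (Fin n) (Fin n) R) (hg : IsUnit g) :
    (1 + Matrix.single i j c) * (1 - Matrix.single i j c) = 1 ∧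
    (1 - Matrix.single i j c) * (1 + Matrix.single i j c) = 1 ∧
    ∃ P : Matrix (Fin n) (Fin n) (Polynomial R),
      P.map (Polynomial.eval 0) = g ∧
      P.map (Polynomial.eval 1) =
        (1 + Matrix.single i j c) * g * (1 - Matrix.single i j c) ∧
      ∀ t : R,
        P.map (Polynomial.eval t) =
          (1 + t • Matrix.single i j c) * g * (1 - t • Matrix.single i j c) ∧
        IsUnit (P.map (Polynomial.eval t)) ∧
        (1 + t • Matrix.single i j c) * (1 - t • Matrix.single i j c) = 1 := by
  have h1 : ∀ d : R, (1 + Matrix.single i j d : Matrix (Fin n) (Fin n) R) *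
      (1 - Matrix.single i j d) = 1 := by
    intro d
    have h : Matrix.single i j d * Matrix.single i j d = 0 :=
      Matrix.single_mul_single_of_ne d i j i hij.symm d
    rw [add_mul, mul_sub, mul_sub, h]
    simp
  have h2 : ∀ d : R, (1 - Matrix.single i j d : Matrix (Fin n) (Fin n) R) *
      (1 + Matrix.single i j d) = 1 := fun d => mul_eq_one_comm.mp (h1 d)
  have key : ∀ t : R, ((1 + Matrix.single i j (Polynomial.X * Polynomial.C c)) *
      g.map Polynomial.C *
      (1 - Matrix.single i j (Polynomial.X * Polynomial.C c))).map (Polynomial.eval t) =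
      (1 + t • Matrix.single i j c) * g * (1 - t • Matrix.single i j c) := by
    intro t
    have hs : (Polynomial.evalRingHom t).mapMatrix
        (Matrix.single i j (Polynomial.X * Polynomial.C c)) = t • Matrix.single i j c := by
      rw [RingHom.mapMatrix_apply, Matrix.map_single, Matrix.smul_single]
      simp
      rw [mul_comm]
    have hgm : (Polynomial.evalRingHom t).mapMatrix (g.map Polynomial.C) = g := by
      ext a b
      simp
    change (Polynomial.evalRingHom t).mapMatrix _ = _
    rw [map_mul, map_mul, map_add, map_sub, map_one, hs, hgm]
  have h3 : ∀ t : R, (1 + t • Matrix.single i j c : Matrix (Fin n) (Fin n) R) *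
      (1 - t • Matrix.single i j c) = 1 := by
    intro t
    rw [Matrix.smul_single]
    exact h1 _
  refine ⟨h1 c, h2 c, _, ?_, ?_, fun t => ⟨key t, ?_, h3 t⟩⟩
  · rw [key]
    simp
  · rw [key]
    simp
  · rw [key]
    have hu := h3 t
    exact ((IsUnit.of_mul_eq_one _ hu).mul hg).mul
      (IsUnit.of_mul_eq_one _ (mul_eq_one_comm.mp hu))
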